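/- (The Claim in Section 3: the function h = s + i·f(z) admits no CR extension.) Let f : ℂ → ℝ be real-differentiable (C¹), let g be continuous and η real-differentiable (C¹) on a neighborhood of the origin of ℂ × ℝ, and suppose that the equation L⁰u = e^η·g is NOT locally solvable at the origin. Let L be the associated operator in the variables (z,s,t) and let h(z,s) := s + i·f(z). Then there is no pair (U, v) consisting of an open neighborhood U of the origin in ℂ × ℝ × ℝ and a C¹ function v : U → ℂ such that L applied to the function (z,s,t) ↦ h(z,s) + t·v(z,s,t) vanishes identically on U. -/

import Mathlib

/-- The Wirtinger derivative `∂̄u` in the complex variable `z` of a function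
`u : ℂ × ℝ → ℂ`, computed from the real Fréchet derivative. -/
noncomputable def wirt (u : ℂ × ℝ → ℂ) (p : ℂ × ℝ) : ℂ :=
  (1 / 2 : ℂ) * (fderiv ℝ u p (1, 0) + Complex.I * fderiv ℝ u p (Complex.I, 0))

/-- The partial derivative `∂u/∂s` in the real variable `s` of `u : ℂ × ℝ → ℂ`. -/
noncomputable def pds (u : ℂ × ℝ → ℂ) (p : ℂ × ℝ) : ℂ :=
  fderiv ℝ u p (0, 1)

/-- The Wirtinger derivative `∂̄f` of a real-valued function `f : ℂ → ℝ`, as a complex number. -/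
noncomputable def wirtf (f : ℂ → ℝ) (z : ℂ) : ℂ :=
  (1 / 2 : ℂ) * ((fderiv ℝ f z 1 : ℂ) + Complex.I * (fderiv ℝ f z Complex.I : ℂ))

/-- The operator `L⁰u = ∂̄u − i·(∂̄f)·∂u/∂s`. -/
noncomputable def L0 (f : ℂ → ℝ) (u : ℂ × ℝ → ℂ) (p : ℂ × ℝ) : ℂ :=
  wirt u p - Complex.I * wirtf f p.1 * pds u p

/-- The equation `L⁰u = G` is locally solvable at the origin: there exist an open
neighborhood `U` of `(0,0)` in `ℂ × ℝ` and a `C¹` function `u` on `U` with `L⁰u = G` on `U`. -/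
def LocSolv (f : ℂ → ℝ) (G : ℂ × ℝ → ℂ) : Prop :=
  ∃ U : Set (ℂ × ℝ), IsOpen U ∧ ((0, 0) : ℂ × ℝ) ∈ U ∧
    ∃ u : ℂ × ℝ → ℂ, ContDiffOn ℝ 1 u U ∧ ∀ p ∈ U, L0 f u p = G p

/-- The Wirtinger derivative `∂̄w` in the complex variable `z` of a function
`w : ℂ × ℝ × ℝ → ℂ`. -/
noncomputable def wirt3 (w : ℂ × ℝ × ℝ → ℂ) (p : ℂ × ℝ × ℝ) : ℂ :=
  (1 / 2 : ℂ) * (fderiv ℝ w p (1, 0, 0) + Complex.I * fderiv ℝ w p (Complex.I, 0, 0))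

/-- The partial derivative `∂w/∂s` of `w : ℂ × ℝ × ℝ → ℂ`. -/
noncomputable def pds3 (w : ℂ × ℝ × ℝ → ℂ) (p : ℂ × ℝ × ℝ) : ℂ :=
  fderiv ℝ w p (0, 1, 0)

/-- The partial derivative `∂w/∂t` of `w : ℂ × ℝ × ℝ → ℂ`. -/
noncomputable def pdt3 (w : ℂ × ℝ × ℝ → ℂ) (p : ℂ × ℝ × ℝ) : ℂ :=
  fderiv ℝ w p (0, 0, 1)

/-- The operator
`Lw = ∂̄w − i·(∂̄f)·∂w/∂s + t·( g·∂w/∂s + (L⁰η)·∂w/∂t )` on functions of `(z,s,t)`. -/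
noncomputable def Lop (f : ℂ → ℝ) (g η : ℂ × ℝ → ℂ) (w : ℂ × ℝ × ℝ → ℂ)
    (p : ℂ × ℝ × ℝ) : ℂ :=
  wirt3 w p - Complex.I * wirtf f p.1 * pds3 w p
    + (p.2.2 : ℂ) * (g (p.1, p.2.1) * pds3 w p + L0 f η (p.1, p.2.1) * pdt3 w p)

/-!
The operator `L` is a derivation with `L t = t · L⁰η`, and `L u = L⁰u + t · g · ∂u/∂s` for functions
`u` of `(z, s)` alone. Since `h = s + i·f(z)` satisfies `L⁰h = 0` and `∂h/∂s = 1`,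
`L(h + t·v) = t · (L v + v · L⁰η + g)`. If this vanishes near the origin, then the second factor
vanishes off `{t = 0}`, hence by continuity also on it, where it says that `v₀ = v(·, ·, 0)`
solves `L⁰v₀ + v₀ · L⁰η + g = 0`. With the integrating factor `e^η` this becomes
`L⁰(-e^η · v₀) = e^η · g`, contradicting the insolvability of that equation.
-/

open Filter Topology

/-- The CR function `h(z, s) = s + i·f(z)` whose extension to `ℂ × ℝ × ℝ` is sought; it is
annihilated by `L⁰` and satisfies `∂h/∂s = 1`. -/
noncomputable def crFun (f : ℂ → ℝ) (p : ℂ × ℝ) : ℂ :=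
  (p.2 : ℂ) + Complex.I * (f p.1 : ℂ)

section Base

variable {f : ℂ → ℝ} {u w η : ℂ × ℝ → ℂ} {p : ℂ × ℝ}

lemma L0_neg : L0 f (fun q => -u q) p = -L0 f u p := by
  simp only [L0, wirt, pds, fderiv_fun_neg, neg_apply]
  ring

lemma L0_mul (hu : DifferentiableAt ℝ u p) (hw : DifferentiableAt ℝ w p) :
    L0 f (fun q => u q * w q) p = u p * L0 f w p + w p * L0 f u p := by
  simp only [L0, wirt, pds, fderiv_fun_mul hu hw, add_apply, smul_apply, smul_eq_mul]
  ring

lemma L0_cexp (hη : DifferentiableAt ℝ η p) :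
    L0 f (fun q => Complex.exp (η q)) p = Complex.exp (η p) * L0 f η p := by
  simp only [L0, wirt, pds, hη.hasFDerivAt.cexp.fderiv, smul_apply, smul_eq_mul]
  ring

lemma hasFDerivAt_crFun (hf : DifferentiableAt ℝ f p.1) :
    HasFDerivAt (crFun f)
      (Complex.ofRealCLM ∘L .snd ℝ ℂ ℝ +
        Complex.I • (Complex.ofRealCLM ∘L fderiv ℝ f p.1 ∘L .fst ℝ ℂ ℝ)) p :=
  (Complex.ofRealCLM.hasFDerivAt.comp p hasFDerivAt_snd).add
    ((Complex.ofRealCLM.hasFDerivAt.comp p (hf.hasFDerivAt.comp p hasFDerivAt_fst)).const_mul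
      Complex.I)

lemma pds_crFun (hf : DifferentiableAt ℝ f p.1) : pds (crFun f) p = 1 := by
  simp [pds, (hasFDerivAt_crFun hf).fderiv]

lemma L0_crFun (hf : DifferentiableAt ℝ f p.1) : L0 f (crFun f) p = 0 := by
  have h_wirt : wirt (crFun f) p = Complex.I * wirtf f p.1 := by
    simp only [wirt, wirtf, (hasFDerivAt_crFun hf).fderiv, add_apply, smul_apply, smul_eq_mul,
      ContinuousLinearMap.comp_apply, ContinuousLinearMap.coe_fst', ContinuousLinearMap.coe_snd',
      Complex.ofRealCLM_apply, Complex.ofReal_zero, zero_add]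
    ring
  rw [L0, h_wirt, pds_crFun hf, mul_one, sub_self]

lemma LocSolv.of_eventually {G : ℂ × ℝ → ℂ} (hu : ContDiffAt ℝ 1 u (0, 0))
    (hL : ∀ᶠ q in 𝓝 (0, 0), L0 f u q = G q) : LocSolv f G := by
  obtain ⟨U, hU, hUo, h0⟩ := eventually_nhds_iff.mp ((hu.eventually (by simp)).and hL)
  exact ⟨U, hUo, h0, u, fun q hq => (hU q hq).1.contDiffWithinAt, fun q hq => (hU q hq).2⟩

end Base

section Extension

variable {f : ℂ → ℝ} {g η : ℂ × ℝ → ℂ} {v w : ℂ × ℝ × ℝ → ℂ} {p : ℂ × ℝ × ℝ}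

lemma Lop_add (hv : DifferentiableAt ℝ v p) (hw : DifferentiableAt ℝ w p) :
    Lop f g η (fun q => v q + w q) p = Lop f g η v p + Lop f g η w p := by
  simp only [Lop, wirt3, pds3, pdt3, fderiv_fun_add hv hw, add_apply]
  ring

lemma Lop_mul (hv : DifferentiableAt ℝ v p) (hw : DifferentiableAt ℝ w p) :
    Lop f g η (fun q => v q * w q) p = v p * Lop f g η w p + w p * Lop f g η v p := by
  simp only [Lop, wirt3, pds3, pdt3, fderiv_fun_mul hv hw, add_apply, smul_apply, smul_eq_mul]
  ring

lemma Lop_comp_proj {u : ℂ × ℝ → ℂ} (hu : DifferentiableAt ℝ u (p.1, p.2.1)) :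
    Lop f g η (fun q => u (q.1, q.2.1)) p =
      L0 f u (p.1, p.2.1) + p.2.2 * (g (p.1, p.2.1) * pds u (p.1, p.2.1)) := by
  have h_proj : HasFDerivAt (fun q : ℂ × ℝ × ℝ => (q.1, q.2.1))
      ((ContinuousLinearMap.fst ℝ ℂ (ℝ × ℝ)).prod (.fst ℝ ℝ ℝ ∘L .snd ℝ ℂ (ℝ × ℝ))) p :=
    hasFDerivAt_fst.prodMk (hasFDerivAt_fst.comp p hasFDerivAt_snd)
  have h_comp := (HasFDerivAt.comp (g := u) p hu.hasFDerivAt h_proj).fderiv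
  simp only [Function.comp_def] at h_comp
  have h_vertical : fderiv ℝ u (p.1, p.2.1) (0, 0) = 0 := map_zero _
  simp [Lop, L0, wirt3, wirt, pds3, pds, pdt3, h_comp, h_vertical]

lemma Lop_t : Lop f g η (fun q => (q.2.2 : ℂ)) p = p.2.2 * L0 f η (p.1, p.2.1) := by
  have h_t : HasFDerivAt (fun q : ℂ × ℝ × ℝ => (q.2.2 : ℂ))
      (Complex.ofRealCLM ∘L .snd ℝ ℝ ℝ ∘L .snd ℝ ℂ (ℝ × ℝ)) p :=
    (Complex.ofRealCLM ∘L .snd ℝ ℝ ℝ ∘L .snd ℝ ℂ (ℝ × ℝ)).hasFDerivAt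
  simp [Lop, wirt3, pds3, pdt3, h_t.fderiv]

lemma Lop_crFun_add_t_mul (hf : DifferentiableAt ℝ f p.1) (hv : DifferentiableAt ℝ v p) :
    Lop f g η (fun q => crFun f (q.1, q.2.1) + q.2.2 * v q) p =
      p.2.2 * (Lop f g η v p + v p * L0 f η (p.1, p.2.1) + g (p.1, p.2.1)) := by
  have hh : DifferentiableAt ℝ (crFun f) (p.1, p.2.1) :=
    (hasFDerivAt_crFun (p := (p.1, p.2.1)) hf).differentiableAt
  have hh_lift : DifferentiableAt ℝ (fun q : ℂ × ℝ × ℝ => crFun f (q.1, q.2.1)) p :=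
    DifferentiableAt.comp (g := crFun f) p hh (by fun_prop)
  have ht : DifferentiableAt ℝ (fun q : ℂ × ℝ × ℝ => (q.2.2 : ℂ)) p := by fun_prop
  rw [Lop_add hh_lift (ht.fun_mul hv), Lop_comp_proj hh, Lop_mul ht hv, Lop_t,
    L0_crFun hf, pds_crFun hf]
  ring

lemma Lop_eq_L0_slice {q : ℂ × ℝ} (hv : DifferentiableAt ℝ v (q.1, q.2, 0)) :
    Lop f g η v (q.1, q.2, 0) = L0 f (fun r => v (r.1, r.2, 0)) q := by
  have h_slice : HasFDerivAt (fun r : ℂ × ℝ => (r.1, r.2, (0 : ℝ)))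
      ((ContinuousLinearMap.fst ℝ ℂ ℝ).prod ((ContinuousLinearMap.snd ℝ ℂ ℝ).prod 0)) q :=
    hasFDerivAt_fst.prodMk (hasFDerivAt_snd.prodMk (hasFDerivAt_const 0 q))
  have h_comp := (HasFDerivAt.comp (g := v) q hv.hasFDerivAt h_slice).fderiv
  simp only [Function.comp_def] at h_comp
  simp [Lop, L0, wirt3, wirt, pds3, pds, h_comp]

lemma continuousAt_Lop_line {z : ℂ} {s t : ℝ} (hv : ContDiffAt ℝ 1 v (z, s, t)) :
    ContinuousAt (fun τ : ℝ => Lop f g η v (z, s, τ)) t := by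
  have h_fderiv : ContinuousAt (fun τ : ℝ => fderiv ℝ v (z, s, τ)) t :=
    ContinuousAt.comp (g := fderiv ℝ v) (hv.continuousAt_fderiv one_ne_zero) (by fun_prop)
  simp only [Lop, wirt3, pds3, pdt3]
  fun_prop

lemma L0_slice_add_mul_add_eq_zero {q : ℂ × ℝ} (hf : DifferentiableAt ℝ f q.1)
    (hv : ContDiffAt ℝ 1 v (q.1, q.2, 0))
    (hL : ∀ᶠ r in 𝓝 (q.1, q.2, 0),
      Lop f g η (fun r => crFun f (r.1, r.2.1) + r.2.2 * v r) r = 0) :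
    L0 f (fun r => v (r.1, r.2, 0)) q + v (q.1, q.2, 0) * L0 f η q + g q = 0 := by
  let quotient : ℝ → ℂ := fun t =>
    Lop f g η v (q.1, q.2, t) + v (q.1, q.2, t) * L0 f η q + g q
  have h_line : Tendsto (fun t : ℝ => (q.1, q.2, t)) (𝓝 0) (𝓝 (q.1, q.2, 0)) :=
    Continuous.tendsto (by fun_prop) 0
  have h_cont : ContinuousAt quotient 0 := by
    have hv_line : ContinuousAt (fun t : ℝ => v (q.1, q.2, t)) 0 :=
      hv.continuousAt.tendsto.comp h_line
    exact ((continuousAt_Lop_line hv).add (hv_line.mul_const _)).add_const _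
  have h_punctured : ∀ᶠ t in 𝓝[≠] 0, quotient t = 0 := by
    have h_near := h_line.eventually ((hv.eventually (by simp)).and hL)
    filter_upwards [nhdsWithin_le_nhds h_near, self_mem_nhdsWithin] with t ⟨hvt, hLt⟩ ht
    rw [Lop_crFun_add_t_mul hf (hvt.differentiableAt one_ne_zero)] at hLt
    exact (mul_eq_zero.mp hLt).resolve_left (Complex.ofReal_ne_zero.mpr ht)
  rw [← Lop_eq_L0_slice (g := g) (η := η) (hv.differentiableAt one_ne_zero)]
  exact ((h_cont.eventuallyEq_nhds_iff_eventuallyEq_nhdsNE continuousAt_const).mp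
    h_punctured).eq_of_nhds

end Extension

lemma L0_neg_cexp_mul {f : ℂ → ℝ} {g η u : ℂ × ℝ → ℂ} {p : ℂ × ℝ}
    (hη : DifferentiableAt ℝ η p) (hu : DifferentiableAt ℝ u p)
    (h : L0 f u p + u p * L0 f η p + g p = 0) :
    L0 f (fun q => -(Complex.exp (η q) * u q)) p = Complex.exp (η p) * g p := by
  rw [L0_neg, L0_mul hη.cexp hu, L0_cexp hη]
  linear_combination -Complex.exp (η p) * h

theorem no_CR_extension_general (f : ℂ → ℝ) (hf : ∀ᶠ z in 𝓝 0, DifferentiableAt ℝ f z)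
    (g η : ℂ × ℝ → ℂ) (hη : ContDiffAt ℝ 1 η (0, 0))
    (hns : ¬ LocSolv f (fun p => Complex.exp (η p) * g p)) :
    ¬ ∃ v : ℂ × ℝ × ℝ → ℂ, ContDiffAt ℝ 1 v (0, 0, 0) ∧
        ∀ᶠ p in 𝓝 (0, 0, 0),
          Lop f g η (fun q => crFun f (q.1, q.2.1) + (q.2.2 : ℂ) * v q) p = 0 := by
  rintro ⟨v, hv, hL⟩
  have h_slice : Tendsto (fun q : ℂ × ℝ => (q.1, q.2, (0 : ℝ))) (𝓝 (0, 0)) (𝓝 (0, 0, 0)) :=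
    Continuous.tendsto (by fun_prop) (0, 0)
  have hv₀ : ContDiffAt ℝ 1 (fun q : ℂ × ℝ => v (q.1, q.2, 0)) (0, 0) :=
    ContDiffAt.comp (g := v) (0, 0) hv (by fun_prop)
  refine hns (.of_eventually (hη.cexp.mul hv₀).neg ?_)
  filter_upwards [continuous_fst.tendsto (0, 0) |>.eventually hf, hη.eventually (by simp),
    hv₀.eventually (by simp), h_slice.eventually (hv.eventually (by simp)),
    h_slice.eventually hL.eventually_nhds] with q hfq hηq hv₀q hvq hLq
  exact L0_neg_cexp_mul (hηq.differentiableAt one_ne_zero) (hv₀q.differentiableAt one_ne_zero)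
    (L0_slice_add_mul_add_eq_zero hfq hvq hLq)

/-- The Claim of Section 3: if `L⁰u = e^η·g` is not locally solvable at the origin, then
the function `h(z,s) = s + i·f(z)` admits no CR extension: there is no `C¹` function `v`
on a neighborhood `U` of the origin of `ℂ × ℝ × ℝ` such that
`L(h + t·v) = 0` on `U`. -/
theorem no_CR_extension (f : ℂ → ℝ) (hf : ContDiff ℝ 1 f)
    (g η : ℂ × ℝ → ℂ) (W : Set (ℂ × ℝ)) (hW : IsOpen W) (hW0 : ((0, 0) : ℂ × ℝ) ∈ W)
    (hg : ContinuousOn g W) (hη : ContDiffOn ℝ 1 η W)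
    (hns : ¬ LocSolv f (fun p => Complex.exp (η p) * g p)) :
    ¬ ∃ (U : Set (ℂ × ℝ × ℝ)) (v : ℂ × ℝ × ℝ → ℂ),
        IsOpen U ∧ ((0, 0, 0) : ℂ × ℝ × ℝ) ∈ U ∧ ContDiffOn ℝ 1 v U ∧
        ∀ p ∈ U, Lop f g η
          (fun q => ((q.2.1 : ℂ) + Complex.I * (f q.1 : ℂ)) + (q.2.2 : ℂ) * v q) p = 0 := by
  rintro ⟨U, v, hU, hU0, hv, hL⟩
  exact no_CR_extension_general f (.of_forall (hf.differentiable one_ne_zero)) g η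
    (hη.contDiffAt (hW.mem_nhds hW0)) hns
    ⟨v, hv.contDiffAt (hU.mem_nhds hU0), eventually_of_mem (hU.mem_nhds hU0) hL⟩
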